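/- arXiv:1806.10026 — 2 statements merged into one kernel-verified Lean document; each statement's English description precedes it below -/
import Mathlib

section
/- Let F be a finite field of odd characteristic with q elements, and let A ⊆ F be a subset with q ≥ 2^{14·|A|}. Then for every subset E ⊆ A there exists y ∈ F such that E = {a ∈ A : there exists z ∈ F with z² = y + a}; that is, E is exactly the set of elements a of A for which y + a is a square in F. -/
/-!
Write `q = |F|` and let `χ` be the quadratic character of `F`. Averaging
`∏ a ∈ A, (1 + ε a * χ (y + a))` over `y` shows that every sign pattern `ε` on `A` is attained
once the sums `∑ y, χ (f y)` are small for the polynomials `f = ∏ a ∈ B, (X + a)`, `∅ ≠ B ⊆ A`.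

For a squarefree `f` these sums are bounded by Stepanov's method. One constructs a nonzero
polynomial `P = ∑ j, (r_j + s_j * f ^ ((q - 1) / 2)) * X ^ (q * j)`, with `r_j` and `s_j` of low
degree, that vanishes to high order at every `x` with `f x ^ ((q - 1) / 2) = ε`. At such points
`X ^ q` and `f ^ ((q - 1) / 2)` may be replaced by `x` and `ε` in the Hasse derivatives of `P`, so
vanishing amounts to a linear system with more unknowns than equations. Comparing the number of
zeros of `P` with its degree bounds the number of these `x`; doing so for `ε = 1` and for `ε = -1`
bounds the character sum from both sides.
-/

open Finset Polynomial

section Divisibility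

theorem exists_linearMap_eq_mul_of_forall_dvd {R M A : Type*} [CommSemiring R] [AddCommMonoid M]
    [Module R M] [CommSemiring A] [Algebra R A] {b : A} (hb : IsLeftRegular b) (φ : M →ₗ[R] A)
    (h : ∀ m, b ∣ φ m) : ∃ ψ : M →ₗ[R] A, ∀ m, φ m = b * ψ m := by
  choose ψ hψ using h
  refine ⟨⟨⟨ψ, fun m n => hb ?_⟩, fun t m => hb ?_⟩, hψ⟩
  · simp only [mul_add, ← hψ, map_add]
  · simp only [mul_smul_comm, ← hψ, map_smul, RingHom.id_apply]

theorem eq_zero_of_sum_mul_pow_eq_zero {R : Type*} [CommRing R] {p : R} (hp : IsLeftRegular p)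
    {J : ℕ} {u : Fin J → R} (hu : ∀ j, p ∣ u j → u j = 0) (h : ∑ j, u j * p ^ (j : ℕ) = 0)
    (j : Fin J) : u j = 0 := by
  induction J with
  | zero => exact j.elim0
  | succ J ih =>
    have hsplit : u 0 + p * ∑ i : Fin J, u i.succ * p ^ (i : ℕ) = 0 := by
      rw [← h, Fin.sum_univ_succ, mul_sum]
      simp [pow_succ', mul_left_comm]
    have h0 : u 0 = 0 :=
      hu 0 ((dvd_add_left (dvd_mul_right _ _)).1 (hsplit ▸ dvd_zero p))
    rw [h0, zero_add] at hsplit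
    have htail : ∑ i : Fin J, u i.succ * p ^ (i : ℕ) = 0 := hp (by simpa using hsplit)
    exact Fin.cases h0 (ih (fun i => hu i.succ) htail) j

theorem eq_zero_of_sq_mul_eq_unit_mul_sq {R : Type*} [CommRing R] [IsDomain R]
    [IsIntegrallyClosed R] {f u r s : R} (hf : Squarefree f) (hf' : ¬IsUnit f) (hu : IsUnit u)
    (h : r ^ 2 * f = u * s ^ 2) : r = 0 := by
  by_contra hr
  obtain ⟨t, rfl⟩ : r ∣ s := by
    rw [← IsIntegrallyClosed.pow_dvd_pow_iff two_ne_zero, ← hu.dvd_mul_left, ← h]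
    exact dvd_mul_right _ _
  have hft : f = u * (t * t) := mul_left_cancel₀ (pow_ne_zero 2 hr) (by rw [h]; ring)
  have ht : IsUnit t := hf t (hft ▸ dvd_mul_left _ _)
  exact hf' (hft ▸ hu.mul (ht.mul ht))

theorem prime_pow_dvd_of_pow_add_dvd_mul_pow {R : Type*} [CommMonoidWithZero R]
    [IsCancelMulZero R] {p f s : R} (hp : Prime p) (hf : ¬p * p ∣ f) {c n : ℕ}
    (h : p ^ (c + n) ∣ s * f ^ c) : p ^ n ∣ s := by
  obtain ⟨g, hg, hfg⟩ : ∃ g, ¬p ∣ g ∧ f ∣ p * g := by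
    by_cases hpf : p ∣ f
    · obtain ⟨g, rfl⟩ := hpf
      exact ⟨g, fun hg => hf (mul_dvd_mul_left p hg), dvd_rfl⟩
    · exact ⟨f, hpf, dvd_mul_left f p⟩
  have hdvd : p ^ c * p ^ n ∣ p ^ c * (s * g ^ c) := by
    rw [← pow_add, mul_left_comm, ← mul_pow]
    exact h.trans (mul_dvd_mul_left s (pow_dvd_pow_of_dvd hfg c))
  exact hp.pow_dvd_of_dvd_mul_right n (fun hpg => hg (hp.dvd_of_dvd_pow hpg))
    ((mul_dvd_mul_iff_left (pow_ne_zero c hp.ne_zero)).1 hdvd)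

theorem card_mul_le_natDegree_of_forall_pow_dvd {R : Type*} [CommRing R] [IsDomain R]
    {P : R[X]} (hP : P ≠ 0) {S : Finset R} {l : ℕ} (h : ∀ x ∈ S, (X - C x) ^ l ∣ P) :
    l * #S ≤ P.natDegree := by
  classical
  have hle : l • S.val ≤ P.roots := by
    refine Multiset.le_iff_count.2 fun x => ?_
    rw [Multiset.count_nsmul, count_roots]
    by_cases hx : x ∈ S
    · rw [Multiset.count_eq_one_of_mem S.nodup hx, mul_one, le_rootMultiplicity_iff hP]
      exact h x hx
    · rw [Multiset.count_eq_zero_of_notMem hx, mul_zero]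
      exact Nat.zero_le _
  simpa using (Multiset.card_le_card hle).trans (card_roots' P)

end Divisibility

section LinearSystem

theorem finrank_degreeLT (R : Type*) [Ring R] [StrongRankCondition R] (n : ℕ) :
    Module.finrank R (degreeLT R n) = n := by
  rw [(degreeLTEquiv R n).finrank_eq, Module.finrank_fin_fun]

theorem exists_ne_zero_forall_eq_zero_of_natDegree_le {F V : Type*} [Field F] [AddCommGroup V]
    [Module F V] [FiniteDimensional F V] {l N : ℕ} (φ : Fin l → V →ₗ[F] F[X])
    (hφ : ∀ k v, (φ k v).natDegree ≤ N) (hl : l * (N + 1) < Module.finrank F V) :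
    ∃ v ≠ 0, ∀ k, φ k v = 0 := by
  have hmem : ∀ k v, φ k v ∈ degreeLT F (N + 1) := fun k v =>
    mem_degreeLT.2 <| (natDegree_le_iff_degree_le.1 (hφ k v)).trans_lt <|
      by exact_mod_cast N.lt_succ_self
  let Φ : V →ₗ[F] Fin l → degreeLT F (N + 1) :=
    LinearMap.pi fun k => (φ k).codRestrict (degreeLT F (N + 1)) (hmem k)
  have hker : Φ.ker ≠ ⊥ := by
    apply LinearMap.ker_ne_bot_of_finrank_lt
    simpa only [Module.finrank_pi_fintype, finrank_degreeLT, sum_const, card_univ, Fintype.card_fin,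
      smul_eq_mul] using hl
  obtain ⟨v, hv, hv0⟩ := Submodule.exists_mem_ne_zero_of_ne_bot hker
  exact ⟨v, hv0, fun k => congrArg Subtype.val (congrFun (LinearMap.mem_ker.1 hv) k)⟩

theorem exists_ne_zero_forall_sum_X_pow_mul_eq_zero {F : Type*} [Field F] {l m J N : ℕ}
    (L : Fin l → F[X] × F[X] →ₗ[F] F[X])
    (hL : ∀ k v, v.1.natDegree ≤ m → v.2.natDegree ≤ m → (L k v).natDegree ≤ N)
    (hcount : l * (J + N + 1) < 2 * (J + 1) * (m + 1)) :
    ∃ v : Fin (J + 1) → F[X] × F[X], v ≠ 0 ∧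
      (∀ j, (v j).1.natDegree ≤ m ∧ (v j).2.natDegree ≤ m) ∧
      ∀ k, ∑ j : Fin (J + 1), X ^ (j : ℕ) * L k (v j) = 0 := by
  let ι : degreeLT F (m + 1) × degreeLT F (m + 1) →ₗ[F] F[X] × F[X] :=
    (degreeLT F (m + 1)).subtype.prodMap (degreeLT F (m + 1)).subtype
  have hι : Function.Injective ι := Subtype.val_injective.prodMap Subtype.val_injective
  have hιdeg : ∀ w, (ι w).1.natDegree ≤ m ∧ (ι w).2.natDegree ≤ m := fun w =>
    ⟨natDegree_le_of_degree_le <| mem_degreeLE.1 <| degreeLT_succ_eq_degreeLE (R := F) ▸ w.1.2,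
      natDegree_le_of_degree_le <| mem_degreeLE.1 <| degreeLT_succ_eq_degreeLE (R := F) ▸ w.2.2⟩
  let φ (k : Fin l) : (Fin (J + 1) → degreeLT F (m + 1) × degreeLT F (m + 1)) →ₗ[F] F[X] :=
    ∑ j : Fin (J + 1), LinearMap.mulLeft F (X ^ (j : ℕ)) ∘ₗ L k ∘ₗ ι ∘ₗ LinearMap.proj j
  have hφ : ∀ k w, φ k w = ∑ j : Fin (J + 1), X ^ (j : ℕ) * L k (ι (w j)) := fun k w => by
    simp [φ, LinearMap.sum_apply]
  have hφdeg : ∀ k w, (φ k w).natDegree ≤ J + N := fun k w => by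
    rw [hφ]
    refine natDegree_sum_le_of_forall_le _ _ fun j _ => natDegree_mul_le_of_le ?_ ?_
    · exact (natDegree_X_pow_le _).trans j.is_le
    · exact hL k _ (hιdeg _).1 (hιdeg _).2
  have hrank : l * (J + N + 1) <
      Module.finrank F (Fin (J + 1) → degreeLT F (m + 1) × degreeLT F (m + 1)) := by
    simp only [Module.finrank_pi_fintype, Module.finrank_prod, finrank_degreeLT, sum_const,
      card_univ, Fintype.card_fin, smul_eq_mul]
    linarith
  obtain ⟨w, hw, hφw⟩ := exists_ne_zero_forall_eq_zero_of_natDegree_le φ hφdeg hrank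
  refine ⟨fun j => ι (w j), fun h => hw ?_, fun j => hιdeg _, fun k => by rw [← hφ, hφw]⟩
  exact funext fun j => hι ((congrFun h j).trans (map_zero ι).symm)

end LinearSystem

section HasseDerivatives

theorem pow_dvd_pow_mul_hasseDeriv_mul_pow {R : Type*} [CommSemiring R] (f s : R[X]) (c k : ℕ) :
    f ^ c ∣ f ^ k * hasseDeriv k (s * f ^ c) := by
  induction c generalizing k with
  | zero => simp only [pow_zero, one_dvd]
  | succ c ih =>
    rw [pow_succ', mul_left_comm s, hasseDeriv_mul, mul_sum]
    refine dvd_sum fun ⟨i, j⟩ hij => ?_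
    obtain rfl : i + j = k := mem_antidiagonal.1 hij
    cases i with
    | zero =>
      rw [hasseDeriv_zero', zero_add, mul_left_comm]
      exact mul_dvd_mul_left f (ih j)
    | succ i =>
      have key : f ^ (i + 1 + j) * (hasseDeriv (i + 1) f * hasseDeriv j (s * f ^ c)) =
          f * (f ^ j * hasseDeriv j (s * f ^ c)) * (f ^ i * hasseDeriv (i + 1) f) := by ring
      rw [key]
      exact (mul_dvd_mul_left f (ih j)).mul_right _

theorem X_sub_C_pow_dvd_of_eval_hasseDeriv_eq_zero {R : Type*} [CommRing R] {p : R[X]} {x : R}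
    {l : ℕ} (h : ∀ k < l, (hasseDeriv k p).eval x = 0) : (X - C x) ^ l ∣ p := by
  rw [X_sub_C_pow_dvd_iff, X_pow_dvd_iff, ← taylor_apply]
  simpa only [taylor_coeff] using h

theorem exists_linearMap_pow_mul_hasseDeriv_mul_pow {R : Type*} [CommRing R] [IsDomain R]
    {f : R[X]} (hf : f ≠ 0) (c k : ℕ) :
    ∃ E : R[X] →ₗ[R] R[X], (∀ s, f ^ k * hasseDeriv k (s * f ^ c) = f ^ c * E s) ∧
      ∀ s, (E s).natDegree ≤ k * f.natDegree + s.natDegree := by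
  obtain ⟨E, hE⟩ := exists_linearMap_eq_mul_of_forall_dvd
    (IsRegular.of_ne_zero (pow_ne_zero c hf)).left
    (LinearMap.mulLeft R (f ^ k) ∘ₗ hasseDeriv k ∘ₗ LinearMap.mulRight R (f ^ c))
    fun s => pow_dvd_pow_mul_hasseDeriv_mul_pow f s c k
  replace hE : ∀ s, f ^ k * hasseDeriv k (s * f ^ c) = f ^ c * E s := hE
  refine ⟨E, hE, fun s => ?_⟩
  obtain h0 | h0 := eq_or_ne (E s) 0
  · simp [h0]
  have hle : (f ^ c * E s).natDegree ≤
      k * f.natDegree + (s.natDegree + c * f.natDegree) := by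
    rw [← hE]
    exact natDegree_mul_le_of_le natDegree_pow_le <| (natDegree_hasseDeriv_le _ _).trans <|
      (Nat.sub_le _ _).trans <| natDegree_mul_le_of_le le_rfl natDegree_pow_le
  rw [natDegree_mul (pow_ne_zero c hf) h0, natDegree_pow] at hle
  omega

theorem exists_linearMap_eval_eq_pow_mul_eval_hasseDeriv {R : Type*} [CommRing R] [IsDomain R]
    {f : R[X]} (hf : f ≠ 0) (a : R) (c k : ℕ) :
    ∃ L : R[X] × R[X] →ₗ[R] R[X],
      (∀ v x, f.eval x ^ c = a →
        (L v).eval x = f.eval x ^ k * (hasseDeriv k (v.1 + v.2 * f ^ c)).eval x) ∧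
      ∀ v m, v.1.natDegree ≤ m → v.2.natDegree ≤ m → (L v).natDegree ≤ k * f.natDegree + m := by
  obtain ⟨E, hE, hdeg⟩ := exists_linearMap_pow_mul_hasseDeriv_mul_pow hf c k
  refine ⟨(LinearMap.mulLeft R (f ^ k) ∘ₗ hasseDeriv k).coprod (a • E), fun v x hx => ?_,
    fun v m hr hs => ?_⟩
  · have hEx : f.eval x ^ k * (hasseDeriv k (v.2 * f ^ c)).eval x = a * (E v.2).eval x := by
      rw [← hx, ← eval_pow, ← eval_mul, hE, eval_mul, eval_pow]
    simp [mul_add, hEx]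
  · refine natDegree_add_le_of_degree_le ?_ ?_
    · exact natDegree_mul_le_of_le natDegree_pow_le <|
        (natDegree_hasseDeriv_le _ _).trans <| (Nat.sub_le _ _).trans hr
    · exact (natDegree_smul_le _ _).trans <| (hdeg _).trans <| Nat.add_le_add_left hs _

theorem exists_forall_X_sub_C_pow_dvd {F : Type*} [Field F] {f : F[X]} (hf : f ≠ 0) {a : F}
    (ha : a ≠ 0) {c l m J : ℕ} (hc : c ≠ 0)
    (hcount : l * (J + (l * f.natDegree + m) + 1) < 2 * (J + 1) * (m + 1)) :
    ∃ v : Fin (J + 1) → F[X] × F[X], v ≠ 0 ∧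
      (∀ j, (v j).1.natDegree ≤ m ∧ (v j).2.natDegree ≤ m) ∧
      ∀ x, f.eval x ^ c = a →
        (X - C x) ^ l ∣ ∑ j : Fin (J + 1), C x ^ (j : ℕ) * ((v j).1 + (v j).2 * f ^ c) := by
  choose L hLeval hLdeg using exists_linearMap_eval_eq_pow_mul_eval_hasseDeriv hf a c
  have hdeg : ∀ (k : Fin l) v, v.1.natDegree ≤ m → v.2.natDegree ≤ m →
      (L k v).natDegree ≤ l * f.natDegree + m := fun k v hr hs =>
    (hLdeg k v m hr hs).trans <| by gcongr; exact k.is_le'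
  obtain ⟨v, hv0, hvdeg, hv⟩ :=
    exists_ne_zero_forall_sum_X_pow_mul_eq_zero (fun k : Fin l => L k) hdeg hcount
  refine ⟨v, hv0, hvdeg, fun x hx => X_sub_C_pow_dvd_of_eval_hasseDeriv_eq_zero fun k hk => ?_⟩
  have hfx : f.eval x ≠ 0 := fun h0 => ha (by rw [← hx, h0, zero_pow hc])
  refine (mul_eq_zero.1 ?_).resolve_left (pow_ne_zero k hfx)
  calc f.eval x ^ k * (hasseDeriv k
        (∑ j : Fin (J + 1), C x ^ (j : ℕ) * ((v j).1 + (v j).2 * f ^ c))).eval x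
      = (∑ j : Fin (J + 1), X ^ (j : ℕ) * L k (v j)).eval x := by
        simp only [map_sum, eval_finsetSum, mul_sum, ← C_pow, ← smul_eq_C_mul, map_smul, eval_smul,
          smul_eq_mul, eval_mul, eval_pow, eval_X, hLeval k _ x hx, mul_left_comm]
    _ = 0 := by rw [hv ⟨k, hk⟩, eval_zero]

end HasseDerivatives

section Stepanov

variable {F : Type*} [Field F] [Fintype F]

theorem X_pow_card_dvd_pow_card_sub_C (f : F[X]) :
    X ^ Fintype.card F ∣ f ^ Fintype.card F - C (f.eval 0) := by
  obtain ⟨g, hg⟩ : X ∣ f - C (f.eval 0) := by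
    rw [X_dvd_iff, coeff_sub, coeff_zero_eq_eval_zero, coeff_C_zero, sub_self]
  rw [← FiniteField.expand_card f, ← expand_C (Fintype.card F) (f.eval 0), ← map_sub, hg,
    map_mul, expand_X]
  exact dvd_mul_right _ _

theorem eq_zero_of_X_pow_card_dvd {f : F[X]} {c m : ℕ} (hf : Squarefree f)
    (hf' : ¬IsUnit f) (hc : 2 * c + 1 = Fintype.card F)
    (hm : 2 * m + f.natDegree < Fintype.card F) {r s : F[X]} (hr : r.natDegree ≤ m)
    (hs : s.natDegree ≤ m) (h : X ^ Fintype.card F ∣ r + s * f ^ c) : r = 0 ∧ s = 0 := by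
  have hsq : r ^ 2 * f = C (f.eval 0) * s ^ 2 := by
    have hdvd : X ^ Fintype.card F ∣ r ^ 2 * f - C (f.eval 0) * s ^ 2 := by
      -- Multiply by the conjugate `r - s * f ^ c` and by `f`, so that only `f ^ q` occurs.
      have key : r ^ 2 * f - C (f.eval 0) * s ^ 2 = (r + s * f ^ c) * ((r - s * f ^ c) * f) +
          (f ^ Fintype.card F - C (f.eval 0)) * s ^ 2 := by
        rw [← hc]; ring
      rw [key]
      exact (h.mul_right _).add ((X_pow_card_dvd_pow_card_sub_C f).mul_right _)
    refine sub_eq_zero.1 (eq_zero_of_dvd_of_natDegree_lt hdvd ?_)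
    rw [natDegree_X_pow]
    refine (natDegree_sub_le_of_le (natDegree_mul_le_of_le (natDegree_pow_le_of_le 2 hr) le_rfl)
      ((natDegree_C_mul_le _ _).trans (natDegree_pow_le_of_le 2 hs))).trans_lt ?_
    omega
  have hr0 : r = 0 := by
    obtain h0 | h0 := eq_or_ne (f.eval 0) 0
    · simpa [h0, hf.ne_zero] using hsq
    · exact eq_zero_of_sq_mul_eq_unit_mul_sq hf hf' (isUnit_C.2 h0.isUnit) hsq
  have hX : ¬X * X ∣ f := fun hXX => not_isUnit_X (hf X hXX)
  have hXs : X ^ (c + 1) ∣ s := by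
    apply prime_pow_dvd_of_pow_add_dvd_mul_pow prime_X hX (c := c)
    rwa [hr0, zero_add, ← hc, two_mul, add_assoc] at h
  refine ⟨hr0, eq_zero_of_dvd_of_natDegree_lt hXs ?_⟩
  rw [natDegree_X_pow]
  omega

theorem X_sub_C_pow_card_dvd_sum_sub_sum {J : ℕ} (u : Fin J → F[X]) (x : F) :
    (X - C x) ^ Fintype.card F ∣
      ∑ j : Fin J, u j * (X ^ Fintype.card F) ^ (j : ℕ) -
        ∑ j : Fin J, C x ^ (j : ℕ) * u j := by
  have hfrob : (X - C x) ^ Fintype.card F = X ^ Fintype.card F - C x := by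
    rw [← FiniteField.expand_card, map_sub, expand_X, expand_C]
  rw [hfrob, ← sum_sub_distrib]
  refine dvd_sum fun j _ => ?_
  rw [mul_comm (C x ^ _), ← mul_sub]
  exact (sub_dvd_pow_sub_pow _ _ _).mul_left _

theorem exists_ne_zero_forall_X_sub_C_pow_dvd {f : F[X]} {c m l J : ℕ} (hf : Squarefree f)
    (hf' : ¬IsUnit f) {a : F} (ha : a ≠ 0) (hc : 2 * c + 1 = Fintype.card F)
    (hm : 2 * m + f.natDegree < Fintype.card F) (hl : l ≤ Fintype.card F)
    (hcount : l * (J + (l * f.natDegree + m) + 1) < 2 * (J + 1) * (m + 1)) :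
    ∃ P : F[X], P ≠ 0 ∧ P.natDegree ≤ m + c * f.natDegree + J * Fintype.card F ∧
      ∀ x, f.eval x ^ c = a → (X - C x) ^ l ∣ P := by
  have hc0 : c ≠ 0 := by
    have := Fintype.one_lt_card (α := F)
    omega
  obtain ⟨v, hv0, hvdeg, hvdvd⟩ := exists_forall_X_sub_C_pow_dvd hf.ne_zero ha hc0 hcount
  have hreg : IsLeftRegular (X ^ Fintype.card F : F[X]) := (monic_X_pow _).isRegular.left
  have hvanish : ∀ j, X ^ Fintype.card F ∣ (v j).1 + (v j).2 * f ^ c → v j = 0 := fun j hj =>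
    Prod.ext_iff.2 (eq_zero_of_X_pow_card_dvd hf hf' hc hm (hvdeg j).1 (hvdeg j).2 hj)
  refine ⟨∑ j : Fin (J + 1), ((v j).1 + (v j).2 * f ^ c) * (X ^ Fintype.card F) ^ (j : ℕ),
    fun hP => hv0 (funext fun j => hvanish j ?_), ?_, fun x hx => ?_⟩
  · rw [eq_zero_of_sum_mul_pow_eq_zero hreg (fun i hi => by simp [hvanish i hi]) hP j]
    exact dvd_zero _
  · refine natDegree_sum_le_of_forall_le _ _ fun j _ => natDegree_mul_le_of_le ?_ ?_
    · refine natDegree_add_le_of_degree_le ((hvdeg j).1.trans (Nat.le_add_right _ _)) ?_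
      exact natDegree_mul_le_of_le (hvdeg j).2 natDegree_pow_le
    · rw [← pow_mul, natDegree_X_pow, mul_comm]
      exact Nat.mul_le_mul_right _ j.is_le
  · exact (dvd_sub_left (hvdvd x hx)).1 <|
      (pow_dvd_pow _ hl).trans (X_sub_C_pow_card_dvd_sum_sub_sum _ x)

theorem four_mul_mul_card_eval_pow_eq_le [DecidableEq F] {f : F[X]} (hf : Squarefree f)
    (hf' : ¬IsUnit f) {a : F} (ha : a ≠ 0) (hq : Odd (Fintype.card F)) {K : ℕ}
    (hK : 2 * K ^ 2 * (2 * f.natDegree + 1) + f.natDegree < Fintype.card F) :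
    4 * K * #{x | f.eval x ^ (Fintype.card F / 2) = a} ≤
      (2 * K + f.natDegree + 1) * Fintype.card F := by
  set d := f.natDegree
  set q := Fintype.card F
  set c := q / 2
  have hc : 2 * c + 1 = q := Nat.two_mul_div_two_add_one_of_odd hq
  set m := K ^ 2 * (2 * d + 1) with hm
  have hmd : 2 * m + d < q := by linarith
  have hl : 2 * K ≤ q := by nlinarith [Nat.le_self_pow two_ne_zero K]
  -- The choice of `m` makes the difference of the two sides equal to `2`.
  have hcount : 2 * K * (K + (2 * K * d + m) + 1) < 2 * (K + 1) * (m + 1) := by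
    calc 2 * K * (K + (2 * K * d + m) + 1) = 2 * (K + 1) * m + 2 * K := by rw [hm]; ring
      _ < 2 * (K + 1) * (m + 1) := by linarith
  obtain ⟨P, hP0, hPdeg, hP⟩ :=
    exists_ne_zero_forall_X_sub_C_pow_dvd hf hf' ha hc hmd hl hcount
  have hN : 2 * K * #{x | f.eval x ^ c = a} ≤ P.natDegree :=
    card_mul_le_natDegree_of_forall_pow_dvd hP0 (by simpa using hP)
  calc 4 * K * #{x | f.eval x ^ c = a} = 2 * (2 * K * #{x | f.eval x ^ c = a}) := by ring
    _ ≤ 2 * (m + c * d + K * q) := by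
      gcongr
      exact hN.trans hPdeg
    _ = 2 * m + 2 * c * d + 2 * K * q := by ring
    _ ≤ q + q * d + 2 * K * q := by
      gcongr <;> lia
    _ = (2 * K + d + 1) * q := by ring

end Stepanov

section Averaging

variable {ι α R : Type*} [Fintype α] [CommRing R]

theorem sum_prod_one_add_sub_card [DecidableEq ι] (s : Finset ι) (g : α → ι → R) :
    ∑ y, ∏ a ∈ s, (1 + g y a) - Fintype.card α =
      ∑ t ∈ s.powerset.erase ∅, ∑ y, ∏ a ∈ t, g y a := by
  simp only [Finset.prod_one_add]
  rw [sum_comm, ← add_sum_erase _ _ (empty_mem_powerset s)]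
  simp

theorem two_mul_abs_sum_prod_one_add_sub_card_le [LinearOrder R] [IsStrictOrderedRing R]
    {s : Finset ι} {g : α → ι → R}
    (h : ∀ t ⊆ s, t.Nonempty → 2 ^ (#s + 1) * |∑ y, ∏ a ∈ t, g y a| ≤ Fintype.card α) :
    2 * |∑ y, ∏ a ∈ s, (1 + g y a) - Fintype.card α| ≤ Fintype.card α := by
  classical
  have hterm : ∀ t ∈ s.powerset.erase ∅,
      2 ^ (#s + 1) * |∑ y, ∏ a ∈ t, g y a| ≤ Fintype.card α := fun t ht =>
    h t (mem_powerset.1 (mem_of_mem_erase ht)) (nonempty_iff_ne_empty.2 (ne_of_mem_erase ht))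
  refine le_of_mul_le_mul_left ?_ (by positivity : (0 : R) < 2 ^ #s)
  rw [← mul_assoc, ← pow_succ, sum_prod_one_add_sub_card]
  calc 2 ^ (#s + 1) * |∑ t ∈ s.powerset.erase ∅, ∑ y, ∏ a ∈ t, g y a|
      ≤ ∑ t ∈ s.powerset.erase ∅, 2 ^ (#s + 1) * |∑ y, ∏ a ∈ t, g y a| := by
        rw [← mul_sum]
        gcongr
        exact abs_sum_le_sum_abs _ _
    _ ≤ #(s.powerset.erase ∅) • (Fintype.card α : R) := sum_le_card_nsmul _ _ _ hterm
    _ ≤ 2 ^ #s * Fintype.card α := by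
        rw [nsmul_eq_mul]
        gcongr
        exact_mod_cast card_erase_le.trans_eq (card_powerset s)

end Averaging

section QuadraticCharacter

variable {F : Type*} [Field F] [Fintype F] [DecidableEq F]

theorem one_add_mul_quadraticChar_le (hF : ringChar F ≠ 2) (ε : ℤˣ) (u : F) :
    1 + ε * quadraticChar F u ≤
      2 * (if u ^ (Fintype.card F / 2) = ((ε : ℤ) : F) then 1 else 0) + if u = 0 then 1 else 0 := by
  obtain rfl | hu := eq_or_ne u 0
  · rw [quadraticChar_zero, if_pos rfl]
    split_ifs <;> norm_num
  · rw [← quadraticChar_eq_pow_of_char_ne_two' hF, if_neg hu]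
    rcases quadraticChar_dichotomy hu with hχ | hχ <;>
      rcases Int.units_eq_one_or ε with rfl | rfl <;> rw [hχ] <;> split_ifs <;> simp_all

theorem two_mul_mul_mul_sum_quadraticChar_eval_le (hF : ringChar F ≠ 2) {f : F[X]}
    (hf : Squarefree f) (hf' : ¬IsUnit f) {K : ℕ}
    (hK : 2 * K ^ 2 * (2 * f.natDegree + 1) + f.natDegree < Fintype.card F) (ε : ℤˣ) :
    2 * K * ((ε : ℤ) * ∑ y, quadraticChar F (f.eval y)) ≤ (f.natDegree + 2) * Fintype.card F := by
  set N := #{y | f.eval y ^ (Fintype.card F / 2) = ((ε : ℤ) : F)}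
  set Z := #{y | f.eval y = 0}
  have hsum : Fintype.card F + (ε : ℤ) * ∑ y, quadraticChar F (f.eval y) ≤ 2 * N + (Z : ℤ) := by
    have h := sum_le_sum fun y (_ : y ∈ univ) => one_add_mul_quadraticChar_le hF ε (f.eval y)
    simpa only [sum_add_distrib, ← mul_sum, sum_boole, sum_const, card_univ, nsmul_one] using h
  have hε : ((ε : ℤ) : F) ≠ 0 := by
    rcases Int.units_eq_one_or ε with rfl | rfl <;> simp
  have hodd : Odd (Fintype.card F) := Nat.odd_iff.2 (FiniteField.odd_card_of_char_ne_two hF)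
  have hNle : 4 * K * N ≤ (2 * K + f.natDegree + 1) * Fintype.card F :=
    four_mul_mul_card_eval_pow_eq_le hf hf' hε hodd hK
  have hZle : Z ≤ f.natDegree := by
    rw [← one_mul Z]
    refine card_mul_le_natDegree_of_forall_pow_dvd hf.ne_zero fun y hy => ?_
    rw [pow_one, dvd_iff_isRoot]
    exact mem_filter_univ y |>.1 hy
  have hKq : 2 * K * f.natDegree ≤ Fintype.card F := by nlinarith
  zify at hNle hZle hKq
  calc 2 * K * ((ε : ℤ) * ∑ y, quadraticChar F (f.eval y))
      ≤ 2 * K * (2 * N + Z - Fintype.card F) := by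
        gcongr
        linarith
    _ = 4 * K * N + 2 * K * Z - 2 * K * Fintype.card F := by ring
    _ ≤ (2 * K + f.natDegree + 1) * Fintype.card F + 2 * K * f.natDegree -
        2 * K * Fintype.card F := by gcongr
    _ ≤ (f.natDegree + 2) * Fintype.card F := by linarith

theorem two_mul_mul_abs_sum_quadraticChar_eval_le (hF : ringChar F ≠ 2) {f : F[X]}
    (hf : Squarefree f) (hf' : ¬IsUnit f) {K : ℕ}
    (hK : 2 * K ^ 2 * (2 * f.natDegree + 1) + f.natDegree < Fintype.card F) :
    2 * K * |∑ y, quadraticChar F (f.eval y)| ≤ (f.natDegree + 2) * Fintype.card F := by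
  have h := two_mul_mul_mul_sum_quadraticChar_eval_le hF hf hf' hK
  rcases abs_choice (∑ y, quadraticChar F (f.eval y)) with habs | habs <;> rw [habs]
  · simpa using h 1
  · simpa using h (-1)

theorem two_mul_sq_mul_add_lt_two_pow {d n : ℕ} (hd : 0 < d) (hdn : d ≤ n) :
    2 * (2 * (2 ^ n) ^ 2) ^ 2 * (2 * d + 1) + d < 2 ^ (9 * n) := by
  have hn : n < 2 ^ n := n.lt_two_pow_self
  rw [mul_comm 9 n, pow_mul]
  generalize 2 ^ n = x at *
  have hx : x ≤ x ^ 4 := Nat.le_self_pow four_ne_zero x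
  calc 2 * (2 * x ^ 2) ^ 2 * (2 * d + 1) + d
      < 2 * (2 * x ^ 2) ^ 2 * (2 * d + 1) + 8 * x ^ 4 := by
        gcongr
        lia
    _ = 2 ^ 4 * x ^ 4 * (d + 1) := by ring
    _ ≤ x ^ 4 * x ^ 4 * x := by
        gcongr <;> lia
    _ = x ^ 9 := by ring

theorem two_pow_mul_abs_sum_prod_quadraticChar_add_le (hF : ringChar F ≠ 2) {B : Finset F}
    (hB : B.Nonempty) {n : ℕ} (hn : #B ≤ n) (hq : 2 ^ (9 * n) ≤ Fintype.card F) :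
    2 ^ (n + 1) * |∑ y, ∏ a ∈ B, quadraticChar F (y + a)| ≤ Fintype.card F := by
  set f : F[X] := ∏ a ∈ B, (X - C (-a))
  have hdeg : f.natDegree = #B := natDegree_finsetProd_X_sub_C_eq_card B _
  have hf : Squarefree f :=
    (separable_prod_X_sub_C_iff'.2 fun a _ b _ hab => neg_injective hab).squarefree
  have hf' : ¬IsUnit f := fun h => by
    have := natDegree_eq_zero_of_isUnit h
    have := hB.card_pos
    omega
  have heval : ∀ y, quadraticChar F (f.eval y) = ∏ a ∈ B, quadraticChar F (y + a) := fun y => by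
    simp only [f, eval_prod, eval_sub, eval_X, eval_C, sub_neg_eq_add, map_prod]
  have hpow : n < 2 ^ n := n.lt_two_pow_self
  have hK : 2 * (2 * (2 ^ n) ^ 2) ^ 2 * (2 * f.natDegree + 1) + f.natDegree < Fintype.card F :=
    (two_mul_sq_mul_add_lt_two_pow (hdeg ▸ hB.card_pos) (hdeg ▸ hn)).trans_le hq
  have h := two_mul_mul_abs_sum_quadraticChar_eval_le hF hf hf' hK
  simp only [heval, hdeg] at h
  refine le_of_mul_le_mul_left ?_ (by positivity : (0 : ℤ) < 2 * 2 ^ n)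
  calc (2 * 2 ^ n : ℤ) * (2 ^ (n + 1) * |∑ y, ∏ a ∈ B, quadraticChar F (y + a)|)
      = 2 * (2 * (2 ^ n) ^ 2 : ℕ) * |∑ y, ∏ a ∈ B, quadraticChar F (y + a)| := by
        push_cast
        ring
    _ ≤ (#B + 2) * Fintype.card F := h
    _ ≤ 2 * 2 ^ n * Fintype.card F := by
        gcongr
        have hB0 := hB.card_pos
        exact_mod_cast (by lia : #B + 2 ≤ 2 * 2 ^ n)

theorem prod_one_add_mul_quadraticChar_eq_zero {A : Finset F} {ε : F → ℤˣ} {y : F}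
    (hy : y ∉ A.image Neg.neg) (hε : ∃ a ∈ A, quadraticChar F (y + a) ≠ ε a) :
    ∏ a ∈ A, (1 + ε a * quadraticChar F (y + a)) = 0 := by
  obtain ⟨a, ha, hne⟩ := hε
  have hya : y + a ≠ 0 := fun h =>
    hy (mem_image.2 ⟨a, ha, (eq_neg_of_add_eq_zero_left h).symm⟩)
  refine prod_eq_zero ha ?_
  rcases quadraticChar_dichotomy hya with hχ | hχ <;>
    rcases Int.units_eq_one_or (ε a) with h | h <;> simp_all

theorem sum_prod_one_add_mul_quadraticChar_le {A : Finset F} {ε : F → ℤˣ}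
    (hε : ∀ y, ∃ a ∈ A, quadraticChar F (y + a) ≠ ε a) :
    ∑ y, ∏ a ∈ A, (1 + ε a * quadraticChar F (y + a)) ≤ #A * 2 ^ #A := by
  have hle : ∀ y, ∏ a ∈ A, (1 + ε a * quadraticChar F (y + a)) ≤ 2 ^ #A := fun y => by
    rw [← prod_const]
    refine prod_le_prod (fun a _ => ?_) fun a _ => ?_ <;>
      rcases Int.units_eq_one_or (ε a) with h | h <;>
      rcases quadraticChar_isQuadratic F (y + a) with hχ | hχ | hχ <;> simp [h, hχ]
  calc ∑ y, ∏ a ∈ A, (1 + ε a * quadraticChar F (y + a))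
      = ∑ y ∈ A.image Neg.neg, ∏ a ∈ A, (1 + ε a * quadraticChar F (y + a)) :=
        (sum_subset (subset_univ _) fun y _ hy =>
          prod_one_add_mul_quadraticChar_eq_zero hy (hε y)).symm
    _ ≤ #(A.image Neg.neg) • 2 ^ #A := sum_le_card_nsmul _ _ _ fun y _ => hle y
    _ ≤ #A * 2 ^ #A := by
        rw [nsmul_eq_mul]
        gcongr ?_ * _
        exact_mod_cast card_image_le (s := A) (f := Neg.neg)

theorem two_mul_abs_sum_prod_one_add_mul_quadraticChar_sub_card_le (hF : ringChar F ≠ 2)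
    {A : Finset F} (hq : 2 ^ (9 * #A) ≤ Fintype.card F) (ε : F → ℤˣ) :
    2 * |∑ y, ∏ a ∈ A, (1 + ε a * quadraticChar F (y + a)) - Fintype.card F| ≤
      Fintype.card F := by
  refine two_mul_abs_sum_prod_one_add_sub_card_le fun B hBA hB => ?_
  have habs : |∏ a ∈ B, (ε a : ℤ)| = 1 := by
    rw [abs_prod]
    exact prod_eq_one fun a _ => Int.isUnit_iff_abs_eq.1 (ε a).isUnit
  simp only [prod_mul_distrib, ← mul_sum, abs_mul, habs, one_mul]
  exact two_pow_mul_abs_sum_prod_quadraticChar_add_le hF hB (card_le_card hBA) hq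

theorem exists_forall_quadraticChar_add_eq (hF : ringChar F ≠ 2) {A : Finset F}
    (hq : 2 ^ (9 * #A) ≤ Fintype.card F) (ε : F → ℤˣ) :
    ∃ y, ∀ a ∈ A, quadraticChar F (y + a) = ε a := by
  by_contra! hε
  have hclose := two_mul_abs_sum_prod_one_add_mul_quadraticChar_sub_card_le hF hq ε
  have hle := sum_prod_one_add_mul_quadraticChar_le hε
  have hupper : Fintype.card F ≤ 2 * (#A * 2 ^ #A) := by
    zify
    linarith [neg_abs_le (∑ y, ∏ a ∈ A, (1 + ε a * quadraticChar F (y + a)) - Fintype.card F)]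
  have hlt : 2 * (#A * 2 ^ #A) < 2 ^ (9 * #A) := by
    calc 2 * (#A * 2 ^ #A) = 2 * #A * 2 ^ #A := (mul_assoc _ _ _).symm
      _ < 2 ^ (2 * #A) * 2 ^ #A := by
        gcongr
        exact Nat.lt_two_pow_self
      _ = 2 ^ (2 * #A + #A) := (pow_add _ _ _).symm
      _ ≤ 2 ^ (9 * #A) := Nat.pow_le_pow_right two_pos (by lia)
  exact absurd hupper (hlt.trans_le hq).not_ge

end QuadraticCharacter

theorem statement12_general (F : Type*) [Field F] [Fintype F] (hodd : ringChar F ≠ 2)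
    (A : Finset F) (hq : 2 ^ (9 * A.card) ≤ Fintype.card F) (E : Set F) :
    ∃ y : F, ∀ a ∈ A, (a ∈ E ↔ ∃ z : F, z ^ 2 = y + a) := by
  classical
  obtain ⟨y, hy⟩ := exists_forall_quadraticChar_add_eq hodd hq fun a =>
    if a ∈ E then 1 else -1
  refine ⟨y, fun a ha => ?_⟩
  have hsq : IsSquare (y + a) ↔ ∃ z, z ^ 2 = y + a := by
    simp only [isSquare_iff_exists_sq, eq_comm]
  rw [← hsq, ← not_iff_not, ← quadraticChar_neg_one_iff_not_isSquare, hy a ha]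
  split_ifs with haE <;> simp [haE]

/-- Let `F` be a finite field of odd characteristic with `q` elements and
`A ⊆ F` a subset with `q ≥ 2 ^ (14 * |A|)`. Then every subset `E ⊆ A` is coded by some
`y ∈ F`: `E` is exactly the set of `a ∈ A` such that `y + a` is a square in `F`. -/
theorem statement12 (F : Type*) [Field F] [Fintype F] (hodd : ringChar F ≠ 2)
    (A : Finset F) (hq : 2 ^ (14 * A.card) ≤ Fintype.card F) :
    ∀ E ⊆ A, ∃ y : F, ∀ a ∈ A, (a ∈ E ↔ ∃ z : F, z ^ 2 = y + a) := fun E _ =>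
  statement12_general F hodd A ((Nat.pow_le_pow_right two_pos (by lia)).trans hq) E
end

section
/- Let F be a finite field of characteristic 2 with q elements, where q ≡ 1 (mod 3), and let A ⊆ F be a subset with q ≥ 2^{14·|A|}. Then for every subset E ⊆ A there exists y ∈ F such that E = {a ∈ A : there exists z ∈ F with z³ = y + a}; that is, E is exactly the set of elements a of A for which y + a is a cube in F. -/
/-!
A pattern of `ℓ`-th power residues on a set of shifts is detected by a multiplicative character `χ`
of order `ℓ`. Expanding the indicator of the pattern gives the main term `q` plus complete sums
`∑ y, χ (f y)`, where `f` is a product of linear factors, not all to a multiplicity divisible by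
`ℓ`; these are `O(√q)`, so the pattern occurs as soon as `√q` is large.

When `q = Q ^ 2`, which is automatic for a power of `2` that is `1` modulo `3`, the bound on the
character sums follows from Stepanov's method. Were some value of `χ (f x)` taken more often than
expected, then on the set `S` of those `x` the Frobenius power `(f x ^ U) ^ Q` would agree with a
constant times a low power `f x ^ V`. Hence the `Q`-th powers of the polynomials
`X ^ (k + Q * j) * (f ^ U) ^ i` agree on `S` with polynomials of small degree. For lack of room the
low-degree polynomials satisfy a linear relation, while the original ones, having distinct orders of
vanishing at `0`, do not; so taking `Q`-th roots of the coefficients of the relation produces a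
nonzero polynomial of controlled degree vanishing on `S`. Thus no value is taken too often, and
since the `ℓ`-th roots of unity sum to zero, the values nearly cancel.
-/

open Finset Polynomial

section Stepanov

theorem natTrailingDegree_pow_eq_mul {R : Type*} [Semiring R] [NoZeroDivisors R] {f : R[X]}
    (hf : f ≠ 0) (n : ℕ) : (f ^ n).natTrailingDegree = n * f.natTrailingDegree := by
  induction n with
  | zero => simp
  | succ n ih => rw [pow_succ, natTrailingDegree_mul (pow_ne_zero n hf) hf, ih, add_one_mul]

theorem linearIndependent_of_injective_natTrailingDegree {ι R : Type*} [Ring R] [NoZeroDivisors R]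
    {T : ι → R[X]} (hT : ∀ i, T i ≠ 0)
    (hinj : Function.Injective fun i ↦ (T i).natTrailingDegree) : LinearIndependent R T := by
  classical
  refine linearIndependent_iff'.2 fun s a hsum ↦ ?_
  by_contra! hne
  obtain ⟨i, hi, hmin⟩ := exists_min_image {j ∈ s | a j ≠ 0} (fun j ↦ (T j).natTrailingDegree)
    (by simpa [Finset.Nonempty] using hne)
  obtain ⟨his, hai⟩ := mem_filter.1 hi
  have hcoeff : ∀ j ∈ s, j ≠ i → (a j • T j).coeff (T i).natTrailingDegree = 0 := by
    intro j hjs hji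
    by_cases haj : a j = 0
    · simp [haj]
    · have hlt := (hmin j (mem_filter.2 ⟨hjs, haj⟩)).lt_of_ne fun h ↦ hji (hinj h.symm)
      rw [coeff_smul, coeff_eq_zero_of_lt_natTrailingDegree hlt, smul_zero]
  have hzero := congrArg (fun p ↦ p.coeff (T i).natTrailingDegree) hsum
  simp only [finsetSum_coeff, coeff_zero] at hzero
  rw [sum_eq_single_of_mem i his hcoeff, coeff_smul, smul_eq_mul] at hzero
  exact mul_ne_zero hai (trailingCoeff_nonzero_iff_nonzero.2 (hT i)) hzero

theorem not_linearIndependent_of_natDegree_le {ι R : Type*} [CommRing R] [Nontrivial R]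
    [Fintype ι] {B : ι → R[X]} {n : ℕ} (hB : ∀ i, (B i).natDegree ≤ n)
    (hn : n + 1 < Fintype.card ι) : ¬ LinearIndependent R B := by
  intro hlin
  let B' : ι → degreeLT R (n + 1) := fun i ↦
    ⟨B i, mem_degreeLT.2 <|
      (natDegree_le_iff_degree_le.1 (hB i)).trans_lt (by exact_mod_cast n.lt_succ_self)⟩
  have hB' : LinearIndependent R B' := .of_comp (degreeLT R (n + 1)).subtype hlin
  have hcard := hB'.fintype_card_le_finrank
  rw [Module.finrank_eq_card_basis (degreeLT.basis R (n + 1)), Fintype.card_fin] at hcard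
  omega

theorem card_le_of_linearIndependent_of_eval_pow_eq {ι F : Type*} [Field F] {p : ℕ} [ExpChar F p]
    [PerfectRing F p] [Fintype ι] (m : ℕ) {T B : ι → F[X]} {S : Finset F}
    {n n' : ℕ} (hT : LinearIndependent F T) (hB : ∀ i, (B i).natDegree ≤ n')
    (hn' : n' + 1 < Fintype.card ι)
    (hTB : ∀ i, ∀ x ∈ S, (T i).eval x ^ p ^ m = (B i).eval x) (hn : ∀ i, (T i).natDegree ≤ n) :
    #S ≤ n := by
  -- By dimension count the `B i` satisfy a relation `b`; taking `p ^ m`-th roots of its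
  -- coefficients gives a combination of the `T i` that is nonzero but vanishes on `S`.
  obtain ⟨b, hbB, i, hbi⟩ :=
    Fintype.not_linearIndependent_iff.1 (not_linearIndependent_of_natDegree_le hB hn')
  choose a ha using (bijective_iterateFrobenius F p m).surjective
  let R : F[X] := ∑ i, a (b i) • T i
  have hR : R ≠ 0 := fun hR ↦ hbi <| by
    rw [← ha (b i), Fintype.linearIndependent_iff.1 hT _ hR i, map_zero]
  have hroot : ∀ x ∈ S, R.eval x = 0 := by
    intro x hx
    refine eq_zero_of_pow_eq_zero (n := p ^ m) ?_
    calc R.eval x ^ p ^ m = ∑ i, a (b i) ^ p ^ m * (T i).eval x ^ p ^ m := by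
          simp only [R, eval_finsetSum, eval_smul, smul_eq_mul, sum_pow_char_pow, mul_pow]
      _ = (∑ i, b i • B i).eval x := by
          simp only [eval_finsetSum, eval_smul, smul_eq_mul]
          exact sum_congr rfl fun i _ ↦ by
            rw [hTB i x hx, ← iterateFrobenius_def, ha]
      _ = 0 := by rw [hbB, eval_zero]
  calc #S ≤ R.natDegree :=
        card_le_degree_of_subset_roots fun x hx ↦ (mem_roots hR).2 (hroot x hx)
    _ ≤ n := natDegree_sum_le_of_forall_le _ _ fun i _ ↦ (natDegree_smul_le _ _).trans (hn i)

/-- The monomials `X ^ (a * k + b * j) * g ^ i`, indexed by the triples `t = (i, j, k)`, from which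
Stepanov's auxiliary polynomial is built: `a = 1`, `b = Q` gives the polynomials themselves, and
`a = Q`, `b = 1` the lower-degree ones agreeing with their `Q`-th powers. -/
noncomputable def stepanovFamily {R : Type*} [Semiring R] (g : R[X]) (a b : ℕ) {d J K : ℕ}
    (t : Fin d × Fin (J + 1) × Fin (K + 1)) : R[X] :=
  X ^ (a * t.2.2 + b * t.2.1) * g ^ (t.1 : ℕ)

theorem natDegree_stepanovFamily_le {R : Type*} [Semiring R] (g : R[X]) (a b : ℕ) {d J K : ℕ}
    (t : Fin d × Fin (J + 1) × Fin (K + 1)) :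
    (stepanovFamily g a b t).natDegree ≤ a * K + b * J + (d - 1) * g.natDegree := by
  obtain ⟨i, j, k⟩ := t
  calc _ ≤ (a * k + b * j : ℕ) + i * g.natDegree :=
        natDegree_mul_le_of_le (natDegree_X_pow_le _) natDegree_pow_le
    _ ≤ _ := by gcongr <;> omega

theorem injective_add_mul_add_mul {d r Q m τ J K : ℕ} (hr : r.Coprime d)
    (hτ : d * τ = Q * m + r) (hK : d * K + r * (d - 1) < Q) :
    Function.Injective fun t : Fin d × Fin (J + 1) × Fin (K + 1) ↦
      (t.2.2 + Q * t.2.1 + t.1 * τ : ℕ) := by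
  have hmul (i j k : ℕ) : d * (k + Q * j + i * τ) = d * k + r * i + Q * (d * j + m * i) := by
    linear_combination i * hτ
  have hlt (i : Fin d) (k : Fin (K + 1)) : d * (k : ℕ) + r * i < Q := by
    refine lt_of_le_of_lt ?_ hK
    gcongr <;> omega
  rintro ⟨i, j, k⟩ ⟨i', j', k'⟩ h
  have hscaled := congrArg (d * ·) h
  simp only [hmul] at hscaled
  have hrem := congrArg (· % Q) hscaled
  simp only [Nat.add_mul_mod_self_left, Nat.mod_eq_of_lt (hlt _ _)] at hrem
  have hmod : r * i ≡ r * i' [MOD d] := by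
    simpa [Nat.ModEq, Nat.mul_add_mod] using congrArg (· % d) hrem
  have hi : (i : ℕ) = i' :=
    (hmod.cancel_left_of_coprime hr.symm).eq_of_lt_of_lt i.2 i'.2
  have hd : 0 < d := i.pos
  have hQ : 0 < Q := by omega
  have hk : (k : ℕ) = k' := by simpa [hi, hd.ne'] using hrem
  have hj : (j : ℕ) = j' := by simpa [hi, hk, hQ.ne'] using h
  exact Prod.ext (Fin.ext hi) (Prod.ext (Fin.ext hj) (Fin.ext hk))

theorem exists_eq_ringChar_pow_of_card_eq_sq {F : Type*} [Field F] [Fintype F] {Q : ℕ}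
    (hcard : Fintype.card F = Q ^ 2) : ∃ m, Q = ringChar F ^ m := by
  obtain ⟨n, hp, hn⟩ := FiniteField.card F (ringChar F)
  obtain ⟨m, -, hm⟩ := (Nat.dvd_prime_pow hp).1 (hn ▸ hcard ▸ dvd_pow_self Q two_ne_zero)
  exact ⟨m, hm⟩

variable {F : Type*} [Field F] [Fintype F] {Q d : ℕ}

theorem card_le_of_eval_pow_eq_eval {r m J K : ℕ} (hcard : Fintype.card F = Q ^ 2)
    {g g' : F[X]} (hg : g ≠ 0) (hr : r.Coprime d) (hτ : d * g.natTrailingDegree = Q * m + r)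
    (hK : d * K + r * (d - 1) < Q)
    (hdim : Q * K + J + (d - 1) * g'.natDegree + 1 < d * ((J + 1) * (K + 1)))
    {S : Finset F} (hS : ∀ x ∈ S, g.eval x ^ Q = g'.eval x) :
    #S ≤ K + Q * J + (d - 1) * g.natDegree := by
  obtain ⟨n, hn⟩ := exists_eq_ringChar_pow_of_card_eq_sq hcard
  have : Fact (ringChar F).Prime := ⟨CharP.char_is_prime F _⟩
  have htrail (t : Fin d × Fin (J + 1) × Fin (K + 1)) :
      (stepanovFamily g 1 Q t).natTrailingDegree =
        t.2.2 + Q * t.2.1 + t.1 * g.natTrailingDegree := by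
    rw [stepanovFamily, natTrailingDegree_mul (pow_ne_zero _ X_ne_zero) (pow_ne_zero _ hg),
      natTrailingDegree_X_pow, natTrailingDegree_pow_eq_mul hg, one_mul]
  refine card_le_of_linearIndependent_of_eval_pow_eq (p := ringChar F) n
    (T := stepanovFamily (d := d) (J := J) (K := K) g 1 Q) (B := stepanovFamily g' Q 1)
    (linearIndependent_of_injective_natTrailingDegree
      (fun t ↦ mul_ne_zero (pow_ne_zero _ X_ne_zero) (pow_ne_zero _ hg))
      (by simpa only [htrail] using injective_add_mul_add_mul hr hτ hK))
    (natDegree_stepanovFamily_le g' Q 1) (by simpa using hdim)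
    (fun t x hx ↦ ?_)
    (fun t ↦ by simpa using natDegree_stepanovFamily_le g 1 Q t)
  have hfrob : x ^ Q ^ 2 = x := hcard ▸ FiniteField.pow_card x
  calc (stepanovFamily g 1 Q t).eval x ^ ringChar F ^ n
      = x ^ (Q * t.2.2) * (x ^ Q ^ 2) ^ (t.2.1 : ℕ) * (g.eval x ^ Q) ^ (t.1 : ℕ) := by
        simp only [stepanovFamily, ← hn, eval_mul, eval_pow, eval_X]
        ring
    _ = (stepanovFamily g' Q 1 t).eval x := by
        simp only [stepanovFamily, hfrob, hS x hx, eval_mul, eval_pow, eval_X, pow_add, one_mul]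

theorem exists_stepanov_parameters {M : ℕ} (hd : 1 < d) (hM : d * M + 1 = Q ^ 2) :
    ∃ c U V, c < d ∧ d * U = Q * c + 1 ∧ d * V = Q + c ∧ U * Q = M * c + V := by
  have hmod : Q % d ≠ 0 := fun h ↦ by
    have hdvd : d ∣ d * M + 1 := hM ▸ dvd_pow (Nat.dvd_of_mod_eq_zero h) two_ne_zero
    exact hd.ne' (Nat.dvd_one.1 ((Nat.dvd_add_right (dvd_mul_right d M)).1 hdvd))
  have hV : d * (Q / d + 1) = Q + (d - Q % d) := by
    have := Nat.mod_lt Q (zero_lt_one.trans hd)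
    have := Nat.div_add_mod Q d
    rw [mul_add_one]
    omega
  generalize hc : d - Q % d = c at hV
  generalize Q / d + 1 = V at hV
  have hMV : d * (Q * V) = d * M + (Q * c + 1) := by
    linear_combination Q * hV - hM
  obtain ⟨U, hU⟩ : ∃ U, Q * V = M + U :=
    Nat.exists_eq_add_of_le (Nat.le_of_mul_le_mul_left (by omega) (zero_lt_one.trans hd))
  have hdU : d * U = Q * c + 1 := by
    rw [hU, mul_add] at hMV
    exact Nat.add_left_cancel hMV
  refine ⟨c, U, V, by omega, hdU, hV, Nat.eq_of_mul_eq_mul_left (zero_lt_one.trans hd) ?_⟩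
  linear_combination Q * hdU - c * hM - hV

theorem stepanov_dimension_count {c K J D : ℕ} (hd : 1 < d) (hQ : d ^ 3 ≤ Q)
    (hK : d * (K + d) = Q + c) (hJ : J + 1 = K + d + D) :
    Q * K + J + (d - 1) * ((K + d) * D) + 1 < d * ((J + 1) * (K + 1)) := by
  obtain ⟨δ, rfl⟩ : ∃ δ, d = δ + 1 := ⟨d - 1, by omega⟩
  have hdV : (δ + 1) ^ 2 ≤ K + (δ + 1) :=
    Nat.le_of_mul_le_mul_left (by linarith [pow_succ' (δ + 1) 2]) δ.succ_pos
  have hVlt : K + (δ + 1) < Q + c := by nlinarith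
  have hdKD : (δ + 1) ^ 2 * D ≤ (K + (δ + 1)) * D := by gcongr
  have hexpand : (δ + 1) * ((J + 1) * (K + 1)) = (Q + c) * (K + 1) + (δ + 1) * D * (K + 1) := by
    linear_combination (δ + 1) * (K + 1) * hJ + (K + 1) * hK
  rw [Nat.add_sub_cancel, hexpand]
  nlinarith [Nat.zero_le (c * K), Nat.zero_le (δ * D)]

theorem stepanov_degree_count {c U K J D : ℕ} (hQ : d ^ 3 ≤ Q) (hc : c < d)
    (hU : d * U = Q * c + 1) (hK : d * (K + d) = Q + c) (hJ : J + 1 = K + d + D) :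
    d * (K + Q * J + (d - 1) * (U * D)) ≤ Q ^ 2 + d ^ 2 * Q * D := by
  obtain ⟨δ, rfl⟩ : ∃ δ, d = δ + 1 := ⟨d - 1, by omega⟩
  have hcQ : Q * c + Q ≤ (δ + 1) * Q := by nlinarith
  have hQ1 : 1 ≤ Q := (Nat.one_le_pow _ _ δ.succ_pos).trans hQ
  have hUD : (δ + 1) * (U * D) ≤ (δ + 1) * Q * D := by
    rw [← mul_assoc, hU]
    gcongr
    omega
  have hmain : (δ + 1) * (K + Q * J) ≤ Q ^ 2 + (δ + 1) * Q * D := by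
    have hexpand : (δ + 1) * (K + Q * J) + (δ + 1) * (δ + 1 + Q) =
        Q + c + Q * (Q + c) + (δ + 1) * Q * D := by
      linear_combination (Q + 1) * hK + (δ + 1) * Q * hJ
    nlinarith
  rw [Nat.add_sub_cancel]
  nlinarith

theorem mul_card_le_of_eval_pow_eq {M : ℕ} (hcard : Fintype.card F = Q ^ 2)
    (hM : d * M + 1 = Q ^ 2) (hd : 1 < d) (hQ : d ^ 3 ≤ Q) {f : F[X]}
    (hf : f.natTrailingDegree.Coprime d) (hlt : f.natTrailingDegree < d) {S : Finset F} {s : F}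
    (hS : ∀ x ∈ S, f.eval x ^ M = s) : d * #S ≤ Q ^ 2 + d ^ 2 * Q * f.natDegree := by
  obtain ⟨c, U, V, hc, hU, hV, hUV⟩ := exists_stepanov_parameters hd hM
  have htrail : f.natTrailingDegree ≠ 0 := fun h ↦ by
    rw [h, Nat.coprime_zero_left] at hf
    omega
  have hf0 : f ≠ 0 := fun h ↦ htrail (by rw [h, natTrailingDegree_zero])
  have hdV : d ^ 2 ≤ V :=
    Nat.le_of_mul_le_mul_left (by linarith [pow_succ' d 2]) (zero_lt_one.trans hd)
  obtain ⟨K, rfl⟩ : ∃ K, V = K + d :=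
    Nat.exists_eq_add_of_le' ((Nat.le_self_pow two_ne_zero d).trans hdV)
  obtain ⟨J, hJ⟩ : ∃ J, J + 1 = K + d + f.natDegree := ⟨K + d + f.natDegree - 1, by omega⟩
  have hdeg : (C (s ^ c) * f ^ (K + d)).natDegree ≤ (K + d) * f.natDegree :=
    (natDegree_C_mul_le _ _).trans natDegree_pow_le
  have htrailU : d * (f ^ U).natTrailingDegree =
      Q * (c * f.natTrailingDegree) + f.natTrailingDegree := by
    rw [natTrailingDegree_pow_eq_mul hf0]
    linear_combination f.natTrailingDegree * hU
  have hdK : d * K + f.natTrailingDegree * (d - 1) < Q := by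
    have : f.natTrailingDegree * (d - 1) ≤ d * (d - 1) := by gcongr
    have : d * (d - 1) + d = d * d := by rw [← Nat.mul_add_one, Nat.sub_add_cancel hd.le]
    linarith
  -- The exponents satisfy `U * Q = M * c + V`, so `(f ^ U) ^ Q = s ^ c * f ^ V` on `S`.
  have hcount := card_le_of_eval_pow_eq_eval hcard (pow_ne_zero U hf0) hf htrailU hdK
    (lt_of_le_of_lt (by gcongr) (stepanov_dimension_count hd hQ hV hJ))
    (fun x hx ↦ show (f ^ U).eval x ^ Q = (C (s ^ c) * f ^ (K + d)).eval x by
      rw [eval_pow, ← pow_mul, hUV, pow_add, pow_mul, hS x hx, eval_mul, eval_C, eval_pow])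
  rw [natDegree_pow] at hcount
  exact (Nat.mul_le_mul_left d hcount).trans (stepanov_degree_count hQ hc hU hV hJ)

end Stepanov

theorem sum_nthRootsFinset_one_eq_zero {R : Type*} [CommRing R] [IsDomain R] {ζ : R} {n : ℕ}
    (hζ : IsPrimitiveRoot ζ n) (hn : 1 < n) : ∑ x ∈ nthRootsFinset n (1 : R), x = 0 := by
  classical
  calc ∑ x ∈ nthRootsFinset n (1 : R), x = (nthRoots n (1 : R)).sum := by
        rw [nthRootsFinset_def, Finset.sum, Multiset.toFinset_val,
          Multiset.dedup_eq_self.2 hζ.nthRoots_one_nodup, Multiset.map_id']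
    _ = ∑ i ∈ range n, ζ ^ i := by
        simp [hζ.nthRoots_eq (one_pow n), Finset.sum]
    _ = 0 := hζ.geom_sum_eq_zero hn

theorem norm_sum_le_of_card_fiber_le {α : Type*} {S : Finset α} {g : α → ℂ} {d : ℕ} {b : ℝ}
    (hd : 1 < d) (hg : ∀ x ∈ S, g x ^ d = 1) (hb : ∀ ζ, #{x ∈ S | g x = ζ} ≤ b) :
    ‖∑ x ∈ S, g x‖ ≤ d * b - #S := by
  classical
  have hd0 : d ≠ 0 := by omega
  let R : Finset ℂ := nthRootsFinset d 1
  have hprim := Complex.isPrimitiveRoot_exp d hd0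
  have hcard : #R = d := hprim.card_nthRootsFinset
  have hsum : ∑ ζ ∈ R, ζ = 0 := sum_nthRootsFinset_one_eq_zero hprim hd
  have hmaps : ∀ x ∈ S, g x ∈ R := fun x hx ↦
    (mem_nthRootsFinset (by omega) 1).2 (hg x hx)
  have hfiber : ∑ x ∈ S, g x = ∑ ζ ∈ R, (#{x ∈ S | g x = ζ} : ℂ) * ζ := by
    rw [← sum_fiberwise_of_maps_to hmaps g]
    refine sum_congr rfl fun ζ _ ↦ ?_
    rw [sum_congr rfl fun x hx ↦ (mem_filter.1 hx).2, sum_const, nsmul_eq_mul]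
  have hdefect : ∑ x ∈ S, g x = -∑ ζ ∈ R, ((b - #{x ∈ S | g x = ζ} : ℝ) : ℂ) * ζ := by
    simp only [hfiber, Complex.ofReal_sub, Complex.ofReal_natCast, sub_mul, sum_sub_distrib]
    rw [← mul_sum, hsum, mul_zero, zero_sub, neg_neg]
  calc ‖∑ x ∈ S, g x‖ ≤ ∑ ζ ∈ R, ‖((b - #{x ∈ S | g x = ζ} : ℝ) : ℂ) * ζ‖ := by
        rw [hdefect, norm_neg]
        exact norm_sum_le _ _
    _ = ∑ ζ ∈ R, (b - #{x ∈ S | g x = ζ} : ℝ) := by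
        refine sum_congr rfl fun ζ hζ ↦ ?_
        have hnorm : ‖ζ‖ = 1 := Complex.norm_eq_one_of_pow_eq_one
          ((mem_nthRootsFinset (by omega) 1).1 hζ) hd0
        rw [norm_mul, hnorm, mul_one, Complex.norm_of_nonneg (sub_nonneg.2 (hb ζ))]
    _ = d * b - #S := by
        rw [sum_sub_distrib, sum_const, hcard, nsmul_eq_mul, ← Nat.cast_sum,
          ← card_eq_sum_card_fiberwise hmaps]

theorem rootMultiplicity_prod_X_add_C_pow {ι R : Type*} [CommRing R] [IsDomain R] [Fintype ι]
    {α : ι → R} (hα : Function.Injective α) (p : ι → ℕ) (i : ι) :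
    (∏ j, (X + C (α j)) ^ p j).rootMultiplicity (-α i) = p i := by
  classical
  have hrest : ¬ (∏ j ∈ univ.erase i, (X + C (α j)) ^ p j).IsRoot (-α i) := by
    rw [IsRoot, eval_prod, prod_eq_zero_iff]
    rintro ⟨j, hj, hzero⟩
    rw [eval_pow, eval_add, eval_X, eval_C] at hzero
    exact ne_of_mem_erase hj (hα (neg_add_eq_zero.1 (eq_zero_of_pow_eq_zero hzero)).symm)
  have hrest0 : ∏ j ∈ univ.erase i, (X + C (α j)) ^ p j ≠ 0 :=
    prod_ne_zero_iff.2 fun j _ ↦ pow_ne_zero _ (X_add_C_ne_zero _)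
  rw [← prod_erase_mul _ _ (mem_univ i), ← sub_neg_eq_add X, ← C_neg,
    rootMultiplicity_mul_X_sub_C_pow hrest0, rootMultiplicity_eq_zero hrest, zero_add]

section MulChar

variable {F : Type*} [Field F]

theorem mulChar_apply_eq_one_iff_exists_pow_eq [Finite F] {R : Type*}
    [CommMonoidWithZero R] {χ : MulChar F R} {x : F} (hx : x ≠ 0) :
    χ x = 1 ↔ ∃ z, z ^ orderOf χ = x := by
  constructor
  · intro hχx
    obtain ⟨g, hg⟩ := IsCyclic.exists_monoid_generator (α := Fˣ)
    obtain ⟨j, hj⟩ := Submonoid.mem_powers_iff _ _ |>.1 (hg (Units.mk0 x hx))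
    have hgj : (g : F) ^ j = x := by simpa using congrArg Units.val hj
    have hχj : χ ^ j = 1 := by
      ext u
      obtain ⟨i, rfl⟩ := Submonoid.mem_powers_iff _ _ |>.1 (hg u)
      rw [MulChar.pow_apply_coe, MulChar.one_apply_coe, ← map_pow, Units.val_pow_eq_pow_val,
        pow_right_comm, hgj, map_pow, hχx, one_pow]
    obtain ⟨i, rfl⟩ := orderOf_dvd_of_pow_eq_one hχj
    exact ⟨(g : F) ^ i, by rw [← pow_mul, mul_comm, hgj]⟩
  · rintro ⟨z, rfl⟩
    have hz : IsUnit z := (ne_zero_pow χ.orderOf_pos.ne' hx).isUnit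
    rw [map_pow, ← MulChar.pow_apply' χ χ.orderOf_pos.ne', pow_orderOf_eq_one,
      MulChar.one_apply hz]

theorem pow_eq_pow_of_mulChar_eq [Fintype F] {R : Type*} [CommMonoidWithZero R]
    {χ : MulChar F R} {M : ℕ} (hM : orderOf χ * M + 1 = Fintype.card F) {u v : F}
    (hu : u ≠ 0) (hv : v ≠ 0) (h : χ u = χ v) : u ^ M = v ^ M := by
  have hquot : χ (u / v) = 1 := by
    have : χ (u / v) * χ v = χ v := by rw [← map_mul, div_mul_cancel₀ u hv, h]
    exact (hv.isUnit.map χ).mul_right_cancel (by rw [this, one_mul])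
  obtain ⟨z, hz⟩ := (mulChar_apply_eq_one_iff_exists_pow_eq (div_ne_zero hu hv)).1 hquot
  have hz0 : z ≠ 0 := ne_zero_pow χ.orderOf_pos.ne' (hz ▸ div_ne_zero hu hv)
  rw [← div_eq_one_iff_eq (pow_ne_zero M hv), ← div_pow, ← hz, ← pow_mul,
    Nat.eq_sub_of_add_eq hM, FiniteField.pow_card_sub_one_eq_one z hz0]

theorem mulChar_apply_pow_orderOf [Finite F] {R : Type*} [CommMonoidWithZero R]
    (χ : MulChar F R) {x : F} (hx : x ≠ 0) : χ x ^ orderOf χ = 1 := by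
  rw [← MulChar.pow_apply' χ χ.orderOf_pos.ne', pow_orderOf_eq_one, MulChar.one_apply hx.isUnit]

theorem norm_mulChar_apply_le_one [Finite F] (χ : MulChar F ℂ) (x : F) : ‖χ x‖ ≤ 1 := by
  obtain rfl | hx := eq_or_ne x 0
  · rw [χ.map_zero, norm_zero]
    exact zero_le_one
  · exact (Complex.norm_eq_one_of_pow_eq_one (mulChar_apply_pow_orderOf χ hx)
      χ.orderOf_pos.ne').le

variable {χ : MulChar F ℂ} {ι : Type*} [Fintype ι] {α : ι → F} {c : ι → ℂ}

/-- Detects the solutions `y` of the system `χ (y + α i) = c i`: if no `y + α i` vanishes and the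
`c i` are roots of unity of order dividing that of `χ`, each factor is a full geometric sum in
`(c i)⁻¹ * χ (y + α i)` and vanishes unless the `i`-th equation holds. -/
noncomputable def patternWeight (χ : MulChar F ℂ) (α : ι → F) (c : ι → ℂ) (y : F) : ℂ :=
  ∏ i, ∑ j ∈ range (orderOf χ), ((c i)⁻¹ * χ (y + α i)) ^ j

theorem patternWeight_eq_zero [Finite F] (hc : ∀ i, c i ^ orderOf χ = 1) {y : F} {i : ι}
    (hy : y + α i ≠ 0) (hi : χ (y + α i) ≠ c i) : patternWeight χ α c y = 0 := by
  have hci : c i ≠ 0 := ne_zero_pow χ.orderOf_pos.ne' (by rw [hc i]; exact one_ne_zero)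
  have hne : (c i)⁻¹ * χ (y + α i) ≠ 1 := fun h ↦ hi ((inv_mul_eq_one₀ hci).1 h).symm
  refine prod_eq_zero (mem_univ i) ?_
  rw [geom_sum_eq hne, mul_pow, inv_pow, hc i, mulChar_apply_pow_orderOf χ hy, inv_one, one_mul,
    sub_self, zero_div]

theorem norm_patternWeight_le [Finite F] (hc : ∀ i, ‖c i‖ = 1) (y : F) :
    ‖patternWeight χ α c y‖ ≤ (orderOf χ : ℝ) ^ Fintype.card ι := by
  have hterm (i : ι) (j : ℕ) : ‖((c i)⁻¹ * χ (y + α i)) ^ j‖ ≤ 1 := by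
    rw [norm_pow, norm_mul, norm_inv, hc i, inv_one, one_mul]
    exact pow_le_one₀ (norm_nonneg _) (norm_mulChar_apply_le_one χ _)
  rw [patternWeight, norm_prod, ← card_univ, ← prod_const]
  refine prod_le_prod (fun i _ ↦ norm_nonneg _) fun i _ ↦ ?_
  simpa using norm_sum_le_of_le (range (orderOf χ)) fun j _ ↦ hterm i j

variable [Fintype F] {Q : ℕ}

theorem norm_sum_mulChar_eval_le_of_natTrailingDegree (hcard : Fintype.card F = Q ^ 2)
    (hχ : 1 < orderOf χ) (hQ : orderOf χ ^ 3 ≤ Q) {f : F[X]}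
    (hf : f.natTrailingDegree.Coprime (orderOf χ)) (hlt : f.natTrailingDegree < orderOf χ) :
    ‖∑ x, χ (f.eval x)‖ ≤ f.natDegree * (orderOf χ ^ 2 * Q + 1) := by
  classical
  have hf0 : f ≠ 0 := by
    rintro rfl
    rw [natTrailingDegree_zero, Nat.coprime_zero_left] at hf
    exact hχ.ne' hf
  obtain ⟨M, hM⟩ := χ.orderOf_dvd_card_sub_one
  replace hM : orderOf χ * M + 1 = Fintype.card F := by
    rw [← hM, Nat.sub_add_cancel Fintype.card_pos]
  let S : Finset F := {x | f.eval x ≠ 0}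
  have hsum : ∑ x ∈ S, χ (f.eval x) = ∑ x, χ (f.eval x) :=
    sum_filter_of_ne fun x _ hx hfx ↦ hx (by rw [hfx, χ.map_zero])
  have hroots : #{x | f.eval x = 0} ≤ f.natDegree :=
    card_le_degree_of_subset_roots fun x hx ↦ (mem_roots hf0).2 (mem_filter.1 hx).2
  have hcardS : (Q : ℝ) ^ 2 ≤ f.natDegree + #S := by
    rw [← Nat.cast_pow, ← hcard, ← card_univ, ← card_filter_add_card_filter_not (f.eval · = 0)]
    push_cast
    gcongr
  have hfiber (ζ : ℂ) : (#{x ∈ S | χ (f.eval x) = ζ} : ℝ) ≤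
      (Q ^ 2 + orderOf χ ^ 2 * Q * f.natDegree) / orderOf χ := by
    rw [le_div_iff₀' (by exact_mod_cast χ.orderOf_pos)]
    obtain hempty | ⟨x₀, hx₀⟩ := ({x ∈ S | χ (f.eval x) = ζ}).eq_empty_or_nonempty
    · rw [hempty, card_empty, Nat.cast_zero, mul_zero]
      positivity
    · simp only [S, mem_filter, mem_univ, true_and] at hx₀
      have hpow : ∀ x ∈ ({x ∈ S | χ (f.eval x) = ζ}), f.eval x ^ M = f.eval x₀ ^ M := by
        intro x hx
        simp only [S, mem_filter, mem_univ, true_and] at hx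
        exact pow_eq_pow_of_mulChar_eq hM hx.1 hx₀.1 (hx.2.trans hx₀.2.symm)
      exact_mod_cast mul_card_le_of_eval_pow_eq hcard (hM.trans hcard) hχ hQ hf hlt hpow
  have hbound := norm_sum_le_of_card_fiber_le hχ
    (fun x hx ↦ mulChar_apply_pow_orderOf χ (mem_filter.1 hx).2) hfiber
  rw [hsum, mul_div_cancel₀ _ (by exact_mod_cast χ.orderOf_pos.ne')] at hbound
  linarith

theorem norm_sum_mulChar_eval_le (hcard : Fintype.card F = Q ^ 2) (hχ : 1 < orderOf χ)
    (hQ : orderOf χ ^ 3 ≤ Q) {f : F[X]} {a : F}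
    (hf : (f.rootMultiplicity a).Coprime (orderOf χ)) (hlt : f.rootMultiplicity a < orderOf χ) :
    ‖∑ x, χ (f.eval x)‖ ≤ f.natDegree * (orderOf χ ^ 2 * Q + 1) := by
  rw [rootMultiplicity_eq_natTrailingDegree] at hf hlt
  calc ‖∑ x, χ (f.eval x)‖ = ‖∑ x, χ ((f.comp (X + C a)).eval x)‖ := by
        simp only [eval_comp, eval_add, eval_X, eval_C]
        rw [← Equiv.sum_comp (Equiv.addRight a) fun x ↦ χ (f.eval x)]
        simp only [Equiv.coe_addRight]
    _ ≤ (f.comp (X + C a)).natDegree * (orderOf χ ^ 2 * Q + 1) :=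
        norm_sum_mulChar_eval_le_of_natTrailingDegree hcard hχ hQ hf hlt
    _ = f.natDegree * (orderOf χ ^ 2 * Q + 1) := by
        rw [natDegree_comp, natDegree_X_add_C, mul_one]

theorem norm_sum_prod_mulChar_le (hcard : Fintype.card F = Q ^ 2)
    (hχ : 1 < orderOf χ) (hQ : orderOf χ ^ 3 ≤ Q) (hα : Function.Injective α)
    {p : ι → ℕ} {i : ι} (hp : (p i).Coprime (orderOf χ)) (hlt : p i < orderOf χ) :
    ‖∑ y, ∏ j, χ (y + α j) ^ p j‖ ≤ (∑ j, p j : ℕ) * (orderOf χ ^ 2 * Q + 1) := by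
  have hdeg : (∏ j, (X + C (α j)) ^ p j).natDegree = ∑ j, p j := by
    rw [natDegree_prod_of_monic _ _ fun j _ ↦ (monic_X_add_C (α j)).pow (p j)]
    simp
  have heval (y : F) : χ ((∏ j, (X + C (α j)) ^ p j).eval y) = ∏ j, χ (y + α j) ^ p j := by
    simp only [eval_prod, eval_pow, eval_add, eval_X, eval_C, map_prod, map_pow]
  simp_rw [← heval, ← hdeg]
  rw [← rootMultiplicity_prod_X_add_C_pow hα p i] at hp hlt
  exact norm_sum_mulChar_eval_le hcard hχ hQ hp hlt

theorem norm_sum_patternWeight_le (hc : ∀ i, c i ^ orderOf χ = 1)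
    (h : ∀ y, ∃ i, χ (y + α i) ≠ c i) :
    ‖∑ y, patternWeight χ α c y‖ ≤ Fintype.card ι * (orderOf χ : ℝ) ^ Fintype.card ι := by
  classical
  have hsupport : ∀ y ∉ univ.image fun i ↦ -α i, patternWeight χ α c y = 0 := by
    intro y hy
    obtain ⟨i, hi⟩ := h y
    refine patternWeight_eq_zero hc (fun hyi ↦ hy ?_) hi
    exact mem_image.2 ⟨i, mem_univ i, (eq_neg_of_add_eq_zero_left hyi).symm⟩
  rw [← sum_subset (subset_univ _) fun y _ hy ↦ hsupport y hy]
  have hnorm (i : ι) : ‖c i‖ = 1 := Complex.norm_eq_one_of_pow_eq_one (hc i) χ.orderOf_pos.ne'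
  calc _ ≤ #(univ.image fun i ↦ -α i) * (orderOf χ : ℝ) ^ Fintype.card ι := by
        rw [← nsmul_eq_mul, ← sum_const]
        exact norm_sum_le_of_le _ fun y _ ↦ norm_patternWeight_le hnorm y
    _ ≤ _ := by
        gcongr
        exact card_image_le

theorem sum_patternWeight_eq [DecidableEq ι] :
    ∑ y, patternWeight χ α c y = ∑ p ∈ Fintype.piFinset fun _ : ι ↦ range (orderOf χ),
      (∏ i, (c i)⁻¹ ^ p i) * ∑ y, ∏ i, χ (y + α i) ^ p i := by
  simp only [patternWeight, prod_univ_sum, mul_sum, mul_pow, prod_mul_distrib]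
  rw [sum_comm]

theorem norm_sum_patternWeight_sub_card_le (hcard : Fintype.card F = Q ^ 2)
    (hχ : (orderOf χ).Prime) (hQ : orderOf χ ^ 3 ≤ Q) (hα : Function.Injective α)
    (hc : ∀ i, ‖c i‖ = 1) :
    ‖∑ y, patternWeight χ α c y - Fintype.card F‖ ≤ (orderOf χ : ℝ) ^ Fintype.card ι *
      (Fintype.card ι * (orderOf χ - 1) * (orderOf χ ^ 2 * Q + 1)) := by
  classical
  set P := Fintype.piFinset fun _ : ι ↦ range (orderOf χ) with hP
  have hzero : (0 : ι → ℕ) ∈ P := by simp [hP, χ.orderOf_pos]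
  have hterm : ∀ p ∈ P.erase 0, ‖(∏ i, (c i)⁻¹ ^ p i) * ∑ y, ∏ i, χ (y + α i) ^ p i‖ ≤
      Fintype.card ι * (orderOf χ - 1) * (orderOf χ ^ 2 * Q + 1) := by
    intro p hp
    obtain ⟨hp0, hpP⟩ := mem_erase.1 hp
    have hplt (i : ι) : p i < orderOf χ := mem_range.1 (Fintype.mem_piFinset.1 hpP i)
    obtain ⟨i, hi⟩ := Function.ne_iff.1 hp0
    have hsum : ((∑ i, p i : ℕ) : ℝ) ≤ Fintype.card ι * (orderOf χ - 1) := by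
      rw [Nat.cast_sum, ← card_univ, ← nsmul_eq_mul]
      exact sum_le_card_nsmul _ _ _ fun j _ ↦ le_sub_iff_add_le.2 (by exact_mod_cast hplt j)
    have hcoeff : ‖∏ i, (c i)⁻¹ ^ p i‖ = 1 := by simp [hc]
    rw [norm_mul, hcoeff, one_mul]
    refine (norm_sum_prod_mulChar_le hcard hχ.one_lt hQ hα
      (Nat.coprime_of_lt_prime hi (hplt i) hχ).symm (hplt i)).trans ?_
    gcongr
  have hmain : (∏ i, (c i)⁻¹ ^ (0 : ι → ℕ) i) * ∑ y, ∏ i, χ (y + α i) ^ (0 : ι → ℕ) i =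
      Fintype.card F := by simp
  rw [sum_patternWeight_eq, ← add_sum_erase _ _ hzero, hmain, add_sub_cancel_left]
  have hcardP : #(P.erase 0) ≤ orderOf χ ^ Fintype.card ι := by
    simpa [hP] using card_le_card (erase_subset (0 : ι → ℕ) P)
  refine (norm_sum_le_of_le _ hterm).trans ?_
  rw [sum_const, nsmul_eq_mul]
  have : (1 : ℝ) ≤ orderOf χ := by exact_mod_cast χ.orderOf_pos
  gcongr
  exact_mod_cast hcardP

theorem exists_forall_mulChar_eq (hcard : Fintype.card F = Q ^ 2) (hχ : (orderOf χ).Prime)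
    (hα : Function.Injective α) (hc : ∀ i, c i ^ orderOf χ = 1)
    (hQ : Fintype.card ι * orderOf χ ^ (Fintype.card ι + 3) ≤ Q) :
    ∃ y, ∀ i, χ (y + α i) = c i := by
  by_contra! h
  have hι : 0 < Fintype.card ι := Fintype.card_pos_iff.2 ((h 0).nonempty)
  set n := Fintype.card ι
  set d := orderOf χ
  have hd3 : d ^ 3 ≤ n * d ^ (n + 3) := by
    rw [pow_add, ← mul_assoc]
    exact Nat.le_mul_of_pos_left _ (mul_pos hι (pow_pos hχ.pos n))
  have hnorm (i : ι) : ‖c i‖ = 1 := Complex.norm_eq_one_of_pow_eq_one (hc i) hχ.ne_zero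
  have hle : (Q : ℝ) ^ 2 ≤ n * d ^ n + d ^ n * (n * (d - 1) * (d ^ 2 * Q + 1)) := by
    calc (Q : ℝ) ^ 2 = ‖∑ y, patternWeight χ α c y -
            (∑ y, patternWeight χ α c y - Fintype.card F)‖ := by simp [hcard]
      _ ≤ _ := (norm_sub_le _ _).trans <| add_le_add (norm_sum_patternWeight_le hc h)
            (norm_sum_patternWeight_sub_card_le hcard hχ (hd3.trans hQ) hα hnorm)
  have hlt : (d : ℝ) < d ^ 2 * Q := by
    have : d ^ 1 < d ^ 3 := Nat.pow_lt_pow_right hχ.one_lt (by norm_num)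
    exact_mod_cast show d < d ^ 2 * Q by nlinarith [hd3.trans hQ, pow_pos hχ.pos 2]
  have hQ' : (n : ℝ) * d ^ (n + 3) * Q ≤ Q ^ 2 := by
    rw [sq]
    gcongr
    exact_mod_cast hQ
  have hgap : (n : ℝ) * d ^ n * d < n * d ^ n * (d ^ 2 * Q) := by
    have : (0 : ℝ) < n * d ^ n := by exact_mod_cast mul_pos hι (pow_pos hχ.pos n)
    gcongr
  refine hle.not_gt (lt_of_lt_of_le ?_ hQ')
  rw [pow_add]
  linear_combination hgap

end MulChar

theorem exists_card_eq_sq_of_ringChar_eq_two {F : Type*} [Field F] [Fintype F]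
    (hchar : ringChar F = 2) (hmod : Fintype.card F % 3 = 1) : ∃ Q, Fintype.card F = Q ^ 2 := by
  obtain ⟨n, -, hn⟩ := FiniteField.card F (ringChar F)
  rw [hchar] at hn
  obtain ⟨k, hk⟩ | ⟨k, hk⟩ := Nat.even_or_odd (n : ℕ)
  · exact ⟨2 ^ k, by rw [hn, hk, ← two_mul, pow_mul']⟩
  · rw [hn, hk, pow_succ, pow_mul, Nat.mul_mod, Nat.pow_mod] at hmod
    norm_num at hmod

theorem mul_three_pow_le_two_pow (n : ℕ) : n * 3 ^ (n + 3) ≤ 2 ^ (7 * n) := by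
  obtain _ | k := n
  · simp
  · calc (k + 1) * 3 ^ (k + 1 + 3) = (k + 1) * 27 * 3 ^ (k + 1) := by ring
      _ ≤ 27 ^ k * 27 * 3 ^ (k + 1) := by
        gcongr
        exact Nat.lt_pow_self (by norm_num)
      _ = 81 ^ (k + 1) := by rw [← pow_succ, ← mul_pow]; norm_num
      _ ≤ 128 ^ (k + 1) := by gcongr; norm_num
      _ = 2 ^ (7 * (k + 1)) := by rw [pow_mul]; norm_num

theorem exists_card_eq_sq_and_mul_three_pow_le {F : Type*} [Field F] [Fintype F]
    (hchar : ringChar F = 2) (hmod : Fintype.card F % 3 = 1) {n : ℕ}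
    (hn : 2 ^ (14 * n) ≤ Fintype.card F) :
    ∃ Q, Fintype.card F = Q ^ 2 ∧ n * 3 ^ (n + 3) ≤ Q := by
  obtain ⟨Q, hQ⟩ := exists_card_eq_sq_of_ringChar_eq_two hchar hmod
  refine ⟨Q, hQ, (mul_three_pow_le_two_pow n).trans ((Nat.pow_le_pow_iff_left two_ne_zero).1 ?_)⟩
  calc (2 ^ (7 * n)) ^ 2 = 2 ^ (14 * n) := by ring
    _ ≤ Q ^ 2 := hQ ▸ hn

theorem statement13_general (F : Type*) [Field F] [Fintype F] {ℓ Q : ℕ} (hℓ : ℓ.Prime)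
    (hcard : Fintype.card F = Q ^ 2) (hmod : Fintype.card F % ℓ = 1) (A : Finset F)
    (hQ : #A * ℓ ^ (#A + 3) ≤ Q) (E : Set F) :
    ∃ y, ∀ a ∈ A, (a ∈ E ↔ ∃ z, z ^ ℓ = y + a) := by
  classical
  have hζ := Complex.isPrimitiveRoot_exp ℓ hℓ.ne_zero
  obtain ⟨χ, rfl⟩ := MulChar.exists_mulChar_orderOf F
    ((Nat.modEq_iff_dvd' Fintype.card_pos).1 (by rw [Nat.ModEq, hmod, Nat.mod_eq_of_lt hℓ.one_lt]))
    hζ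
  set ζ := Complex.exp (2 * Real.pi * Complex.I / orderOf χ)
  obtain ⟨y, hy⟩ := exists_forall_mulChar_eq (χ := χ) (α := ((↑) : A → F))
    (c := fun a ↦ if (a : F) ∈ E then 1 else ζ) hcard hℓ Subtype.val_injective
    (fun a ↦ by split_ifs <;> simp [hζ.pow_eq_one]) (by simpa using hQ)
  refine ⟨y, fun a ha ↦ ?_⟩
  have hya : χ (y + a) = if a ∈ E then 1 else ζ := hy ⟨a, ha⟩
  have hne : y + a ≠ 0 := by
    intro h
    rw [h, χ.map_zero] at hya
    split_ifs at hya
    · exact zero_ne_one hya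
    · exact hζ.ne_zero hℓ.ne_zero hya.symm
  rw [← mulChar_apply_eq_one_iff_exists_pow_eq hne, hya]
  simp [hζ.ne_one hℓ.one_lt]

/-- Let `F` be a finite field of characteristic 2 with `q` elements, where
`q ≡ 1 (mod 3)`, and `A ⊆ F` a subset with `q ≥ 2 ^ (14 * |A|)`. Then every subset `E ⊆ A`
is coded by some `y ∈ F`: `E` is exactly the set of `a ∈ A` such that `y + a` is a cube. -/
theorem statement13 (F : Type*) [Field F] [Fintype F] (hchar : ringChar F = 2)
    (hmod : Fintype.card F % 3 = 1)
    (A : Finset F) (hq : 2 ^ (14 * A.card) ≤ Fintype.card F) :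
    ∀ E ⊆ A, ∃ y : F, ∀ a ∈ A, (a ∈ E ↔ ∃ z : F, z ^ 3 = y + a) := by
  intro E _
  obtain ⟨Q, hcard, hQ⟩ := exists_card_eq_sq_and_mul_three_pow_le hchar hmod hq
  exact statement13_general F Nat.prime_three hcard hmod A hQ E
end
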